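/- arXiv:1507.00438 — 7 statements merged into one kernel-verified Lean document; each statement's English description precedes it below -/
import Mathlib

section
/- (Lemma 1, existential form.) Let f₁, f₂ : ℝ^d → ℝ be continuously differentiable convex functions, h₁, h₂ : ℝ^d → ℝ convex, x⋆ ∈ ℝ^d, and H a symmetric positive definite linear map. Then x⋆ is a stationary point of F = f₁ − f₂ + h₁ − h₂ (i.e., there exist z₁ ∈ ∂h₁(x⋆) and z₂ ∈ ∂h₂(x⋆) with ∇f₁(x⋆) − ∇f₂(x⋆) + z₁ − z₂ = 0) if and only if there exists z₂ ∈ ∂h₂(x⋆) such that the unique minimizer over d ∈ ℝ^d of ⟨v, d⟩ + ½⟨H d, d⟩ + h₁(x⋆ + d), with v = ∇f₁(x⋆) − ∇f₂(x⋆) − z₂, equals 0. -/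
open RealInnerProductSpace

/-!
For `t ∈ (0, 1]`, moving from `x` to `x + t • (y - x)` changes a convex `φ` by at most
`t * (φ y - φ x)`, while a quadratic form `Q` centred at `x` changes by only `t ^ 2 * Q (y - x)`.
Dividing by `t` and letting `t → 0`, the quadratic term disappears, so a nonnegative quadratic form
centred at `x` does not affect whether `x` minimizes `φ`. Hence `0` minimizes the
model `⟪v, d⟫ + ½⟪H d, d⟫ + h₁ (x + d)` iff it minimizes `⟪v, d⟫ + h₁ (x + d)`, that is, iff
`-v ∈ ∂h₁(x)`; for `v = ∇f₁(x) - ∇f₂(x) - z₂` this `-v` is the `z₁` required by stationarity.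
-/

section QuadraticPerturbation

variable {E : Type*} [AddCommGroup E] [Module ℝ E] {s : Set E} {φ : E → ℝ} {x y : E}
  {Q : QuadraticForm ℝ E}

theorem le_add_mul_quadraticForm_of_isMinOn (hφ : ConvexOn ℝ s φ) (hx : x ∈ s) (hy : y ∈ s)
    (hmin : IsMinOn (fun y ↦ φ y + Q (y - x)) s x) {t : ℝ} (ht₀ : 0 < t) (ht₁ : t ≤ 1) :
    φ x ≤ φ y + t * Q (y - x) := by
  have hmem : x + t • (y - x) ∈ s := hφ.1.add_smul_sub_mem hx hy ⟨ht₀.le, ht₁⟩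
  have hconv : φ (x + t • (y - x)) ≤ (1 - t) * φ x + t * φ y := by
    have hcomb : (1 - t) • x + t • y = x + t • (y - x) := by module
    simpa only [hcomb, smul_eq_mul] using hφ.2 hx hy (sub_nonneg.2 ht₁) ht₀.le (sub_add_cancel 1 t)
  have hle : φ x ≤ φ (x + t • (y - x)) + t * t * Q (y - x) := by
    simpa [QuadraticMap.map_smul] using isMinOn_iff.1 hmin _ hmem
  refine le_of_mul_le_mul_left ?_ ht₀
  linarith

theorem isMinOn_add_quadraticForm_sub_iff (hφ : ConvexOn ℝ s φ) (hx : x ∈ s)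
    (hQ : ∀ u, 0 ≤ Q u) :
    IsMinOn (fun y ↦ φ y + Q (y - x)) s x ↔ IsMinOn φ s x := by
  refine ⟨fun hmin ↦ isMinOn_iff.2 fun y hy ↦ ?_, fun hmin ↦ isMinOn_iff.2 fun y hy ↦ ?_⟩
  · have hlim : Filter.Tendsto (fun t : ℝ ↦ φ y + t * Q (y - x)) (nhdsWithin 0 (Set.Ioi 0))
        (nhds (φ y)) :=
      tendsto_nhdsWithin_of_tendsto_nhds <|
        Continuous.tendsto' (by fun_prop) _ _ (by simp only [zero_mul, add_zero])
    refine ge_of_tendsto hlim ?_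
    filter_upwards [Ioc_mem_nhdsGT one_pos] with t ht
    exact le_add_mul_quadraticForm_of_isMinOn hφ hx hy hmin ht.1 ht.2
  · simpa using add_le_add (isMinOn_iff.1 hmin y hy) (hQ (y - x))

end QuadraticPerturbation

section Subdifferential

variable {E : Type*} [NormedAddCommGroup E] [InnerProductSpace ℝ E]

/-- The convex subdifferential `∂h(x)`: the slopes of the affine minorants of `h` that are exact
at `x`, with functionals represented by vectors through the inner product. -/
def subdifferential (h : E → ℝ) (x : E) : Set E :=
  {z | ∀ y, h x + ⟪z, y - x⟫ ≤ h y}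

/-- The local model `d ↦ ⟪v, d⟫ + ½⟪H d, d⟫ + h (x + d)` minimized by a proximal Newton step
from `x`: linear and quadratic in the smooth part of the objective, exact in `h`. -/
noncomputable def proxNewtonModel (v : E) (H : E →ₗ[ℝ] E) (h : E → ℝ) (x d : E) : ℝ :=
  ⟪v, d⟫ + (1 / 2) * ⟪H d, d⟫ + h (x + d)

theorem mem_subdifferential_iff {h : E → ℝ} {x z : E} :
    z ∈ subdifferential h x ↔ ∀ y, h x + ⟪z, y - x⟫ ≤ h y :=
  Iff.rfl

theorem neg_mem_subdifferential_iff_isMinOn {h : E → ℝ} {v x : E} :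
    -v ∈ subdifferential h x ↔ IsMinOn (fun d ↦ ⟪v, d⟫ + h (x + d)) Set.univ 0 := by
  rw [isMinOn_univ_iff, mem_subdifferential_iff, (Equiv.addLeft x).surjective.forall]
  refine forall_congr' fun d ↦ ?_
  simp only [Equiv.coe_addLeft, add_sub_cancel_left, inner_neg_left, inner_zero_right, add_zero,
    zero_add, ← sub_eq_add_neg, sub_le_iff_le_add']

theorem isMinOn_proxNewtonModel_zero_iff {h : E → ℝ} (hh : ConvexOn ℝ Set.univ h)
    {H : E →ₗ[ℝ] E} (hH : ∀ u, 0 ≤ ⟪H u, u⟫) {v x : E} :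
    IsMinOn (proxNewtonModel v H h x) Set.univ 0 ↔ -v ∈ subdifferential h x := by
  let Q : QuadraticForm ℝ E :=
    LinearMap.BilinMap.toQuadraticMap ((1 / 2 : ℝ) • (innerₗ E ∘ₗ H))
  have hQ : ∀ u, Q u = 1 / 2 * ⟪H u, u⟫ := fun _ ↦ rfl
  have hφ : ConvexOn ℝ Set.univ fun d ↦ ⟪v, d⟫ + h (x + d) :=
    ((innerₗ E v).convexOn convex_univ).add (hh.translate_right x)
  have hmodel : proxNewtonModel v H h x = fun d ↦ (⟪v, d⟫ + h (x + d)) + Q (d - 0) := by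
    funext d
    rw [proxNewtonModel, sub_zero, hQ, add_right_comm]
  rw [hmodel, neg_mem_subdifferential_iff_isMinOn]
  refine isMinOn_add_quadraticForm_sub_iff hφ (Set.mem_univ 0) fun u ↦ ?_
  rw [hQ]
  exact mul_nonneg one_half_pos.le (hH u)

/-- The vector `g` stands for the smooth part `∇f₁(x) - ∇f₂(x)`. -/
theorem stmt_5_general {h₁ : E → ℝ} (hh₁ : ConvexOn ℝ Set.univ h₁) (h₂ : E → ℝ) {H : E →ₗ[ℝ] E}
    (hH : ∀ u, 0 ≤ ⟪H u, u⟫) (g x : E) :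
    (∃ z₁ z₂, z₁ ∈ subdifferential h₁ x ∧ z₂ ∈ subdifferential h₂ x ∧ g + z₁ - z₂ = 0) ↔
      ∃ z₂ ∈ subdifferential h₂ x, IsMinOn (proxNewtonModel (g - z₂) H h₁ x) Set.univ 0 := by
  have hstat (z₁ z₂ : E) : g + z₁ - z₂ = 0 ↔ z₁ = -(g - z₂) := by
    rw [eq_neg_iff_add_eq_zero, add_comm z₁, sub_add_eq_add_sub]
  simp only [isMinOn_proxNewtonModel_zero_iff hh₁ hH, hstat]
  constructor
  · rintro ⟨_, z₂, hz₁, hz₂, rfl⟩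
    exact ⟨z₂, hz₂, hz₁⟩
  · rintro ⟨z₂, hz₂, hz₁⟩
    exact ⟨_, z₂, hz₁, hz₂, rfl⟩

end Subdifferential

theorem stmt_5 (d : ℕ) (hd : 1 ≤ d)
    (f₁ f₂ h₁ h₂ : EuclideanSpace ℝ (Fin d) → ℝ)
    (hf₁ : ContDiff ℝ 1 f₁) (hf₂ : ContDiff ℝ 1 f₂)
    (hf₁c : ConvexOn ℝ Set.univ f₁) (hf₂c : ConvexOn ℝ Set.univ f₂)
    (hh₁ : ConvexOn ℝ Set.univ h₁) (hh₂ : ConvexOn ℝ Set.univ h₂)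
    (xstar : EuclideanSpace ℝ (Fin d))
    (H : EuclideanSpace ℝ (Fin d) →ₗ[ℝ] EuclideanSpace ℝ (Fin d))
    (hsym : ∀ u w : EuclideanSpace ℝ (Fin d), ⟪H u, w⟫ = ⟪u, H w⟫)
    (hpd : ∀ u : EuclideanSpace ℝ (Fin d), u ≠ 0 → 0 < ⟪H u, u⟫) :
    (∃ z₁ z₂ : EuclideanSpace ℝ (Fin d),
        (∀ y, h₁ y ≥ h₁ xstar + ⟪z₁, y - xstar⟫) ∧
        (∀ y, h₂ y ≥ h₂ xstar + ⟪z₂, y - xstar⟫) ∧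
        gradient f₁ xstar - gradient f₂ xstar + z₁ - z₂ = 0)
    ↔ (∃ z₂ : EuclideanSpace ℝ (Fin d),
        (∀ y, h₂ y ≥ h₂ xstar + ⟪z₂, y - xstar⟫) ∧
        ∃ Δxstar : EuclideanSpace ℝ (Fin d),
          (∀ dd : EuclideanSpace ℝ (Fin d),
            ⟪gradient f₁ xstar - gradient f₂ xstar - z₂, Δxstar⟫
              + (1/2) * ⟪H Δxstar, Δxstar⟫ + h₁ (xstar + Δxstar)
            ≤ ⟪gradient f₁ xstar - gradient f₂ xstar - z₂, dd⟫
              + (1/2) * ⟪H dd, dd⟫ + h₁ (xstar + dd)) ∧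
          Δxstar = 0) := by
  have hnonneg : ∀ u, 0 ≤ ⟪H u, u⟫ := fun u ↦
    (eq_or_ne u 0).elim (fun hu ↦ by simp [hu]) fun hu ↦ (hpd u hu).le
  simpa only [mem_subdifferential_iff, proxNewtonModel, isMinOn_univ_iff, exists_eq_right] using
    stmt_5_general hh₁ h₂ hnonneg (gradient f₁ xstar - gradient f₂ xstar) xstar
end

section
/- (Lemma 2, convexity estimate.) Let f₁ : ℝ^d → ℝ be any function, f₂ : ℝ^d → ℝ convex and differentiable, and h₁, h₂ : ℝ^d → ℝ convex; set F = f₁ − f₂ + h₁ − h₂. Then for every x, Δ ∈ ℝ^d, every t ∈ [0, 1], and every z_{h₂} ∈ ∂h₂(x), one has F(x + tΔ) − F(x) ≤ f₁(x + tΔ) − f₁(x) + t·(h₁(x + Δ) − h₁(x)) − t·⟨∇f₂(x) + z_{h₂}, Δ⟩. -/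
open RealInnerProductSpace

/-!
Write `F = f₁ + h₁ - (f₂ + h₂)`. On the segment from `x` to `x + Δ` the convex function `h₁` lies
below its chord, while `f₂ + h₂` lies above the affine function through its value at `x` whose slope
is the sum of a subgradient of `f₂` (its gradient, by convexity) and a subgradient of `h₂`.
-/

theorem convexOn_add_smul_sub_le_mul_sub {E : Type*} [AddCommGroup E] [Module ℝ E]
    {s : Set E} {h : E → ℝ} (hh : ConvexOn ℝ s h) {x Δ : E} (hx : x ∈ s) (hxΔ : x + Δ ∈ s) {t : ℝ}
    (ht : t ∈ Set.Icc (0 : ℝ) 1) :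
    h (x + t • Δ) - h x ≤ t * (h (x + Δ) - h x) := by
  have chord := hh.2 hx hxΔ (sub_nonneg.2 ht.2) ht.1 (sub_add_cancel 1 t)
  have point_eq : (1 - t) • x + t • (x + Δ) = x + t • Δ := by module
  rw [point_eq, smul_eq_mul, smul_eq_mul] at chord
  linarith

theorem convexOn_add_fderiv_le {E : Type*} [NormedAddCommGroup E] [NormedSpace ℝ E]
    {s : Set E} {f : E → ℝ} {f' : E →L[ℝ] ℝ} {x y : E} (hf : ConvexOn ℝ s f)
    (hf' : HasFDerivWithinAt f f' s x) (hx : x ∈ s) (hy : y ∈ s) :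
    f x + f' (y - x) ≤ f y := by
  let line : ℝ →ᵃ[ℝ] E := AffineMap.lineMap x y
  have line_zero : line 0 = x := AffineMap.lineMap_apply_zero x y
  have line_one : line 1 = y := AffineMap.lineMap_apply_one x y
  have convex_line : ConvexOn ℝ (line ⁻¹' s) (f ∘ line) := hf.comp_affineMap line
  have deriv_line : HasDerivWithinAt (f ∘ line) (f' (y - x)) (line ⁻¹' s) 0 :=
    hf'.comp_hasDerivWithinAt_of_eq 0 AffineMap.hasDerivWithinAt_lineMap
      (Set.mapsTo_preimage line s) line_zero.symm
  have le_slope : f' (y - x) ≤ slope (f ∘ line) 0 1 :=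
    convex_line.le_slope_of_hasDerivWithinAt (by simpa only [Set.mem_preimage, line_zero])
      (by simpa only [Set.mem_preimage, line_one]) one_pos deriv_line
  rw [slope_def_field, Function.comp_apply, Function.comp_apply, line_zero, line_one, sub_zero,
    div_one] at le_slope
  linarith

section InnerProductSpace

variable {E : Type*} [NormedAddCommGroup E] [InnerProductSpace ℝ E] {s : Set E} {x : E}

/-- `z` is a subgradient at `x` of the restriction of `h` to `s`. For `s = Set.univ` this says
`z ∈ ∂h(x)`. -/
def IsSubgradientWithinAt (h : E → ℝ) (z : E) (s : Set E) (x : E) : Prop :=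
  ∀ y ∈ s, h x + ⟪z, y - x⟫ ≤ h y

namespace IsSubgradientWithinAt

theorem add {f g : E → ℝ} {u v : E} (hf : IsSubgradientWithinAt f u s x)
    (hg : IsSubgradientWithinAt g v s x) : IsSubgradientWithinAt (f + g) (u + v) s x := by
  intro y hy
  simp only [Pi.add_apply, inner_add_left]
  linarith [hf y hy, hg y hy]

theorem mul_inner_le_sub {h : E → ℝ} {z Δ : E} {t : ℝ} (hz : IsSubgradientWithinAt h z s x)
    (hxt : x + t • Δ ∈ s) : t * ⟪z, Δ⟫ ≤ h (x + t • Δ) - h x := by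
  have affine_le := hz (x + t • Δ) hxt
  rw [add_sub_cancel_left, real_inner_smul_right] at affine_le
  linarith

theorem of_hasGradientWithinAt [CompleteSpace E] {f : E → ℝ} {g : E} (hf : ConvexOn ℝ s f)
    (hg : HasGradientWithinAt f g s x) (hx : x ∈ s) : IsSubgradientWithinAt f g s x := by
  intro y hy
  simpa only [InnerProductSpace.toDual_apply_apply] using
    convexOn_add_fderiv_le hf hg.hasFDerivWithinAt hx hy

end IsSubgradientWithinAt

theorem stmt_6_general (f₁ : E → ℝ) {f₂ h₁ h₂ : E → ℝ} (hh₁ : ConvexOn ℝ s h₁) {zf₂ zh₂ Δ : E}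
    (hzf₂ : IsSubgradientWithinAt f₂ zf₂ s x) (hzh₂ : IsSubgradientWithinAt h₂ zh₂ s x)
    (hx : x ∈ s) (hxΔ : x + Δ ∈ s) {t : ℝ} (ht : t ∈ Set.Icc (0 : ℝ) 1) :
    (f₁ - f₂ + h₁ - h₂) (x + t • Δ) - (f₁ - f₂ + h₁ - h₂) x
      ≤ f₁ (x + t • Δ) - f₁ x + t * (h₁ (x + Δ) - h₁ x) - t * ⟪zf₂ + zh₂, Δ⟫ := by
  have upper := convexOn_add_smul_sub_le_mul_sub hh₁ hx hxΔ ht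
  have lower := (hzf₂.add hzh₂).mul_inner_le_sub (hh₁.1.add_smul_mem hx hxΔ ht)
  simp only [Pi.add_apply, Pi.sub_apply] at lower ⊢
  linarith

end InnerProductSpace

theorem stmt_6 (d : ℕ) (hd : 1 ≤ d)
    (f₁ f₂ h₁ h₂ : EuclideanSpace ℝ (Fin d) → ℝ)
    (hf₂c : ConvexOn ℝ Set.univ f₂) (hf₂ : Differentiable ℝ f₂)
    (hh₁ : ConvexOn ℝ Set.univ h₁) (hh₂ : ConvexOn ℝ Set.univ h₂)
    (F : EuclideanSpace ℝ (Fin d) → ℝ)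
    (hF : ∀ x, F x = f₁ x - f₂ x + h₁ x - h₂ x) :
    ∀ (x Δ : EuclideanSpace ℝ (Fin d)) (t : ℝ), t ∈ Set.Icc (0:ℝ) 1 →
      ∀ zh₂ : EuclideanSpace ℝ (Fin d),
        (∀ y, h₂ y ≥ h₂ x + ⟪zh₂, y - x⟫) →
        F (x + t • Δ) - F x
          ≤ f₁ (x + t • Δ) - f₁ x + t * (h₁ (x + Δ) - h₁ x)
            - t * ⟪gradient f₂ x + zh₂, Δ⟫ := by
  intro x Δ t ht zh₂ hzh₂
  obtain rfl : F = f₁ - f₂ + h₁ - h₂ := funext hF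
  have hzf₂ := IsSubgradientWithinAt.of_hasGradientWithinAt hf₂c
    (hasGradientWithinAt_univ.2 (hf₂ x).hasGradientAt) (Set.mem_univ x)
  exact stmt_6_general f₁ hh₁ hzf₂ (fun y _ => hzh₂ y) (Set.mem_univ x) (Set.mem_univ (x + Δ)) ht
end

section
/- (Key descent inequality for the search direction.) Let h₁ : ℝ^d → ℝ be convex, H : ℝ^d → ℝ^d a symmetric positive definite linear map, x, v ∈ ℝ^d, and let Δx be a minimizer over d ∈ ℝ^d of ⟨v, d⟩ + ½⟨H d, d⟩ + h₁(x + d). Then for every t ∈ [0, 1], ⟨v, Δx⟩ + h₁(x + Δx) − h₁(x) ≤ −½(1 + t)·⟨H Δx, Δx⟩; in particular (t = 1), ⟨v, Δx⟩ + h₁(x + Δx) − h₁(x) ≤ −⟨H Δx, Δx⟩. -/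
open RealInnerProductSpace

/-!
Compare the minimizer `Δ` of the model with the shorter step `t • Δ`. By convexity `h` changes
along `t • Δ` by at most `t` times its change along `Δ`, while the quadratic term scales by `t ^ 2`;
since `1 - t ^ 2 = (1 - t) * (1 + t)`, dividing by `1 - t` gives the claim for `t < 1`, and `t = 1`
follows by passing to the limit.
-/

theorem map_add_smul_le_of_convexOn {𝕜 E β : Type*} [CommRing 𝕜] [PartialOrder 𝕜]
    [IsOrderedAddMonoid 𝕜] [AddCommGroup E] [Module 𝕜 E] [AddCommGroup β] [PartialOrder β]
    [Module 𝕜 β] {s : Set E} {h : E → β} {x Δ : E} {t : 𝕜} (hh : ConvexOn 𝕜 s h) (hx : x ∈ s)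
    (hxΔ : x + Δ ∈ s) (ht : t ∈ Set.Icc 0 1) :
    h (x + t • Δ) ≤ h x + t • (h (x + Δ) - h x) :=
  calc
    h (x + t • Δ) = h ((1 - t) • x + t • (x + Δ)) := by congr 1; module
    _ ≤ (1 - t) • h x + t • h (x + Δ) :=
      hh.2 hx hxΔ (sub_nonneg.2 ht.2) ht.1 (sub_add_cancel 1 t)
    _ = h x + t • (h (x + Δ) - h x) := by module

section CompositeModel

variable {𝕜 E : Type*} [Field 𝕜] [AddCommGroup E] [Module 𝕜 E]

/-- The local model `u ↦ ℓ u + ½ Q u + h (x + u)` at `x` of a composite objective, whose smooth part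
is approximated to second order by `ℓ` (its gradient) and `Q` (its curvature) and whose nonsmooth
part `h` is kept exactly. Its minimizers are the search directions of proximal Newton methods. -/
def compositeModel (ℓ : Module.Dual 𝕜 E) (Q : QuadraticForm 𝕜 E) (h : E → 𝕜) (x u : E) : 𝕜 :=
  ℓ u + (1 / 2) * Q u + h (x + u)

variable {ℓ : Module.Dual 𝕜 E} {Q : QuadraticForm 𝕜 E} {h : E → 𝕜} {x Δ : E} {t : 𝕜}

theorem compositeModel_smul :
    compositeModel ℓ Q h x (t • Δ) = t * ℓ Δ + (1 / 2) * (t ^ 2 * Q Δ) + h (x + t • Δ) := by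
  simp only [compositeModel, map_smul, QuadraticMap.map_smul, smul_eq_mul, sq]

variable [LinearOrder 𝕜] [IsStrictOrderedRing 𝕜] {s : Set E}

theorem descent_of_compositeModel_le_smul (hh : ConvexOn 𝕜 s h) (hx : x ∈ s) (hxΔ : x + Δ ∈ s)
    (ht : t ∈ Set.Ico 0 1)
    (hle : compositeModel ℓ Q h x Δ ≤ compositeModel ℓ Q h x (t • Δ)) :
    ℓ Δ + h (x + Δ) - h x ≤ -(1 / 2) * (1 + t) * Q Δ := by
  have hconv := map_add_smul_le_of_convexOn hh hx hxΔ (Set.Ico_subset_Icc_self ht)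
  rw [smul_eq_mul] at hconv
  rw [compositeModel_smul, compositeModel] at hle
  have hscaled : (1 - t) * (ℓ Δ + h (x + Δ) - h x) ≤ (1 - t) * (-(1 / 2) * (1 + t) * Q Δ) := by
    linarith
  exact le_of_mul_le_mul_left hscaled (sub_pos.2 ht.2)

theorem stmt_7_general (hh : ConvexOn 𝕜 s h) (hx : x ∈ s) (hxΔ : x + Δ ∈ s)
    (hmin : IsMinOn (compositeModel ℓ Q h x) {u | x + u ∈ s} Δ) (ht : t ∈ Set.Icc 0 1) :
    ℓ Δ + h (x + Δ) - h x ≤ -(1 / 2) * (1 + t) * Q Δ := by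
  let _ : TopologicalSpace 𝕜 := Preorder.topology 𝕜
  have : OrderTopology 𝕜 := ⟨rfl⟩
  have descent_Ico : ∀ r ∈ Set.Ico (0 : 𝕜) 1,
      ℓ Δ + h (x + Δ) - h x ≤ -(1 / 2) * (1 + r) * Q Δ := fun r hr =>
    descent_of_compositeModel_le_smul hh hx hxΔ hr <|
      hmin (hh.1.add_smul_mem hx hxΔ (Set.Ico_subset_Icc_self hr))
  rw [← closure_Ico zero_ne_one] at ht
  exact le_on_closure descent_Ico (by fun_prop) (by fun_prop) ht

end CompositeModel

theorem stmt_7 (d : ℕ) (hd : 1 ≤ d)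
    (h₁ : EuclideanSpace ℝ (Fin d) → ℝ) (hh₁ : ConvexOn ℝ Set.univ h₁)
    (H : EuclideanSpace ℝ (Fin d) →ₗ[ℝ] EuclideanSpace ℝ (Fin d))
    (hsym : ∀ u w : EuclideanSpace ℝ (Fin d), ⟪H u, w⟫ = ⟪u, H w⟫)
    (hpd : ∀ u : EuclideanSpace ℝ (Fin d), u ≠ 0 → 0 < ⟪H u, u⟫)
    (x v Δx : EuclideanSpace ℝ (Fin d))
    (hmin : ∀ dd : EuclideanSpace ℝ (Fin d),
      ⟪v, Δx⟫ + (1/2) * ⟪H Δx, Δx⟫ + h₁ (x + Δx)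
        ≤ ⟪v, dd⟫ + (1/2) * ⟪H dd, dd⟫ + h₁ (x + dd)) :
    (∀ t : ℝ, t ∈ Set.Icc (0:ℝ) 1 →
      ⟪v, Δx⟫ + h₁ (x + Δx) - h₁ x ≤ -(1/2) * (1 + t) * ⟪H Δx, Δx⟫) ∧
    ⟪v, Δx⟫ + h₁ (x + Δx) - h₁ x ≤ -⟪H Δx, Δx⟫ := by
  have descent (t : ℝ) (ht : t ∈ Set.Icc (0 : ℝ) 1) :=
    stmt_7_general (ℓ := innerₗ _ v) (Q := LinearMap.BilinMap.toQuadraticMap (innerₗ _ ∘ₗ H))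
      hh₁ (Set.mem_univ x) (Set.mem_univ (x + Δx)) (fun u _ => hmin u) ht
  exact ⟨descent, (descent 1 (Set.right_mem_Icc.2 zero_le_one)).trans_eq (by norm_num)⟩
end

section
/- (Smooth descent estimate.) Let f₁ : ℝ^d → ℝ be differentiable with L-Lipschitz gradient (‖∇f₁(x) − ∇f₁(y)‖ ≤ L‖x − y‖ for all x, y), f₂ : ℝ^d → ℝ convex differentiable, h₁, h₂ : ℝ^d → ℝ convex; set F = f₁ − f₂ + h₁ − h₂. Fix x, Δ ∈ ℝ^d and z_{h₂} ∈ ∂h₂(x), let v = ∇f₁(x) − ∇f₂(x) − z_{h₂} and D = ⟨v, Δ⟩ + h₁(x + Δ) − h₁(x). Then for every t ∈ [0, 1], F(x + tΔ) − F(x) ≤ t·( (tL/2)·‖Δ‖² + D ). -/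
open RealInnerProductSpace

/-!
The increment of `F = f₁ - f₂ + h₁ - h₂` from `x` to `x + t • Δ` is bounded term by term: `f₁` by
its first-order expansion with quadratic remainder `L / 2 * ‖t • Δ‖ ^ 2`, `-f₂` and `-h₂` by the
supporting affine functions of `f₂` and `h₂` at `x`, and `h₁` by its chord from `x` to `x + Δ`.
-/

section NormedSpace

variable {E G : Type*} [NormedAddCommGroup E] [NormedSpace ℝ E]
  [NormedAddCommGroup G] [NormedSpace ℝ G] {s : Set E} {x y : E}

theorem norm_image_sub_sub_smul_le_of_norm_deriv_right_sub_le_segment {g g' : ℝ → G} {v : G}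
    {a b C : ℝ} (hg : ContinuousOn g (Set.Icc a b))
    (hg' : ∀ r ∈ Set.Ico a b, HasDerivWithinAt g (g' r) (Set.Ici r) r)
    (bound : ∀ r ∈ Set.Ico a b, ‖g' r - v‖ ≤ C * (r - a)) :
    ∀ r ∈ Set.Icc a b, ‖g r - g a - (r - a) • v‖ ≤ C / 2 * (r - a) ^ 2 := by
  have hderiv (r : ℝ) (hr : r ∈ Set.Ico a b) :
      HasDerivWithinAt (fun r ↦ g r - g a - (r - a) • v) (g' r - v) (Set.Ici r) r := by
    simpa using! ((hg' r hr).sub_const (g a)).sub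
      (((hasDerivWithinAt_id r (Set.Ici r)).sub_const a).smul_const v)
  have hquad (r : ℝ) : HasDerivAt (fun r ↦ C / 2 * (r - a) ^ 2) (C * (r - a)) r :=
    ((((hasDerivAt_id r).sub_const a).pow 2).const_mul (C / 2)).congr_deriv <| by
      simp only [id]; ring
  exact image_norm_le_of_norm_deriv_right_le_deriv_boundary (by fun_prop) hderiv (by simp)
    hquad bound

theorem norm_image_sub_sub_le_of_norm_hasFDerivWithinAt_sub_le {f : E → G} {f' : E → E →L[ℝ] G}
    {L : ℝ} (hs : Convex ℝ s) (hf : ∀ z ∈ s, HasFDerivWithinAt f (f' z) s z)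
    (hlip : ∀ z ∈ s, ‖f' z - f' x‖ ≤ L * ‖z - x‖) (hx : x ∈ s) (hy : y ∈ s) :
    ‖f y - f x - f' x (y - x)‖ ≤ L / 2 * ‖y - x‖ ^ 2 := by
  let γ : ℝ → E := AffineMap.lineMap x y
  have hγ : Set.MapsTo γ (Set.Icc 0 1) s := fun r hr ↦ hs.lineMap_mem hx hy hr
  have hderiv (r : ℝ) (hr : r ∈ Set.Icc (0 : ℝ) 1) :
      HasDerivWithinAt (f ∘ γ) (f' (γ r) (y - x)) (Set.Icc 0 1) r :=
    (hf _ (hγ hr)).comp_hasDerivWithinAt r AffineMap.hasDerivWithinAt_lineMap hγ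
  have hbound (r : ℝ) (hr : r ∈ Set.Ico (0 : ℝ) 1) :
      ‖f' (γ r) (y - x) - f' x (y - x)‖ ≤ L * ‖y - x‖ ^ 2 * (r - 0) := calc
    ‖(f' (γ r) - f' x) (y - x)‖ ≤ L * ‖γ r - x‖ * ‖y - x‖ :=
      (f' (γ r) - f' x).le_of_opNorm_le (hlip _ (hγ (Set.Ico_subset_Icc_self hr))) _
    _ = L * (r * ‖y - x‖) * ‖y - x‖ := by
      simp [γ, AffineMap.lineMap_apply, norm_smul, abs_of_nonneg hr.1]
    _ = L * ‖y - x‖ ^ 2 * (r - 0) := by ring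
  have hle := norm_image_sub_sub_smul_le_of_norm_deriv_right_sub_le_segment
    (fun r hr ↦ (hderiv r hr).continuousWithinAt)
    (fun r hr ↦ (hderiv r (Set.Ico_subset_Icc_self hr)).mono_of_mem_nhdsWithin
      (Icc_mem_nhdsGE_of_mem hr))
    hbound 1 (Set.right_mem_Icc.2 zero_le_one)
  calc
    ‖f y - f x - f' x (y - x)‖ ≤ L * ‖y - x‖ ^ 2 / 2 := by simpa [γ] using hle
    _ = L / 2 * ‖y - x‖ ^ 2 := by ring

theorem add_apply_sub_le_of_convexOn_of_hasFDerivWithinAt {f : E → ℝ} {f' : E →L[ℝ] ℝ}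
    (hf : ConvexOn ℝ s f) (hf' : HasFDerivWithinAt f f' s x) (hx : x ∈ s) (hy : y ∈ s) :
    f x + f' (y - x) ≤ f y := by
  let γ : ℝ →ᵃ[ℝ] E := AffineMap.lineMap x y
  have hderiv : HasDerivWithinAt (f ∘ γ) (f' (y - x)) (γ ⁻¹' s) 0 :=
    HasFDerivWithinAt.comp_hasDerivWithinAt 0 (by simpa [γ] using hf')
      AffineMap.hasDerivWithinAt_lineMap (Set.mapsTo_preimage γ s)
  have hslope : f' (y - x) ≤ slope (f ∘ γ) 0 1 :=
    (hf.comp_affineMap γ).le_slope_of_hasDerivWithinAt (by simpa [γ] using hx)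
      (by simpa [γ] using hy) zero_lt_one hderiv
  simp only [slope_def_field, Function.comp_apply, γ, AffineMap.lineMap_apply_zero,
    AffineMap.lineMap_apply_one, sub_zero, div_one] at hslope
  linarith

theorem stmt_8_general {f₁ f₂ h₁ h₂ F : E → ℝ} {f₁' : E → StrongDual ℝ E}
    {f₂' z v : StrongDual ℝ E} {L D t : ℝ} {Δ : E}
    (hf₁ : ∀ y, HasFDerivAt f₁ (f₁' y) y) (hlip : ∀ y, ‖f₁' y - f₁' x‖ ≤ L * ‖y - x‖)
    (hf₂c : ConvexOn ℝ Set.univ f₂) (hf₂ : HasFDerivAt f₂ f₂' x)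
    (hh₁ : ConvexOn ℝ Set.univ h₁) (hz : ∀ y, h₂ x + z (y - x) ≤ h₂ y)
    (hF : ∀ y, F y = f₁ y - f₂ y + h₁ y - h₂ y)
    (hv : v = f₁' x - f₂' - z) (hD : D = v Δ + h₁ (x + Δ) - h₁ x) (ht : t ∈ Set.Icc (0 : ℝ) 1) :
    F (x + t • Δ) - F x ≤ t * (t * L / 2 * ‖Δ‖ ^ 2 + D) := by
  have hf₁_le : f₁ (x + t • Δ) - f₁ x - t * f₁' x Δ ≤ L / 2 * (t ^ 2 * ‖Δ‖ ^ 2) := by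
    simpa [norm_smul, mul_pow] using (le_abs_self _).trans
      (norm_image_sub_sub_le_of_norm_hasFDerivWithinAt_sub_le (y := x + t • Δ) convex_univ
        (fun y _ ↦ (hf₁ y).hasFDerivWithinAt) (fun y _ ↦ hlip y) (Set.mem_univ x) (Set.mem_univ _))
  have hf₂_ge : f₂ x + t * f₂' Δ ≤ f₂ (x + t • Δ) := by
    simpa using add_apply_sub_le_of_convexOn_of_hasFDerivWithinAt (y := x + t • Δ) hf₂c
      hf₂.hasFDerivWithinAt (Set.mem_univ x) (Set.mem_univ _)
  have hh₁_le : h₁ (x + t • Δ) ≤ (1 - t) * h₁ x + t * h₁ (x + Δ) := by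
    have hpoint : (1 - t) • x + t • (x + Δ) = x + t • Δ := by module
    simpa only [hpoint, smul_eq_mul] using hh₁.2 (Set.mem_univ x) (Set.mem_univ (x + Δ))
      (sub_nonneg.2 ht.2) ht.1 (sub_add_cancel 1 t)
  have hh₂_ge : h₂ x + t * z Δ ≤ h₂ (x + t • Δ) := by simpa using hz (x + t • Δ)
  simp only [hF, hD, hv, sub_apply]
  linarith

end NormedSpace

theorem stmt_8 (d : ℕ) (hd : 1 ≤ d)
    (f₁ f₂ h₁ h₂ : EuclideanSpace ℝ (Fin d) → ℝ) (L : ℝ)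
    (hf₁ : Differentiable ℝ f₁)
    (hlip : ∀ x y : EuclideanSpace ℝ (Fin d),
      ‖gradient f₁ x - gradient f₁ y‖ ≤ L * ‖x - y‖)
    (hf₂c : ConvexOn ℝ Set.univ f₂) (hf₂ : Differentiable ℝ f₂)
    (hh₁ : ConvexOn ℝ Set.univ h₁) (hh₂ : ConvexOn ℝ Set.univ h₂)
    (F : EuclideanSpace ℝ (Fin d) → ℝ)
    (hF : ∀ x, F x = f₁ x - f₂ x + h₁ x - h₂ x)
    (x Δ zh₂ : EuclideanSpace ℝ (Fin d))
    (hzh₂ : ∀ y, h₂ y ≥ h₂ x + ⟪zh₂, y - x⟫)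
    (v : EuclideanSpace ℝ (Fin d))
    (hv : v = gradient f₁ x - gradient f₂ x - zh₂)
    (D : ℝ) (hD : D = ⟪v, Δ⟫ + h₁ (x + Δ) - h₁ x) :
    ∀ t : ℝ, t ∈ Set.Icc (0:ℝ) 1 →
      F (x + t • Δ) - F x ≤ t * ((t * L / 2) * ‖Δ‖ ^ 2 + D) := by
  intro t ht
  exact stmt_8_general (fun y ↦ (hf₁ y).hasGradientAt.hasFDerivAt)
    (fun y ↦ by simpa only [← map_sub, LinearIsometryEquiv.norm_map] using hlip y x)
    hf₂c (hf₂ x).hasGradientAt.hasFDerivAt hh₁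
    (z := InnerProductSpace.toDual ℝ _ zh₂) (v := InnerProductSpace.toDual ℝ _ v) hzh₂ hF
    (by simp [hv]) hD ht
end

section
/- (Lemma 3: existence of admissible step sizes.) Let f₁ : ℝ^d → ℝ be differentiable with L-Lipschitz gradient (L > 0), f₂ : ℝ^d → ℝ convex differentiable, h₁, h₂ : ℝ^d → ℝ convex; set F = f₁ − f₂ + h₁ − h₂. Let H be a symmetric positive definite linear map with ⟨Hu, u⟩ ≥ m‖u‖² for all u, where m > 0, fix x ∈ ℝ^d and z_{h₂} ∈ ∂h₂(x), set v = ∇f₁(x) − ∇f₂(x) − z_{h₂}, let Δx be a minimizer over d ∈ ℝ^d of ⟨v, d⟩ + ½⟨H d, d⟩ + h₁(x + d), and let D = ⟨v, Δx⟩ + h₁(x + Δx) − h₁(x). Then for every α ∈ (0, 1) and every t with 0 < t ≤ min(1, 2m(1 − α)/L), the sufficient descent condition F(x + tΔx) − F(x) ≤ α·t·D holds. -/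
open RealInnerProductSpace

/-!
The gradient inequality makes `∇f₂(x) + z` a subgradient of `f₂ + h₂`, so only a smooth part, a
convex part and a subtracted function with a known subgradient matter. The descent lemma for the
smooth part, that subgradient and the convexity of `h₁` give
`F(x + tΔx) - F(x) ≤ tD + (L/2)t²‖Δx‖²`. Comparing the minimizer `Δx` with `(1 - s)Δx` and letting
`s → 0` gives `D ≤ -⟨HΔx, Δx⟩ ≤ -m‖Δx‖²`, and since `Lt ≤ 2m(1 - α)` the part `(1 - α)tD` of the
linear term absorbs the quadratic one.
-/

open AffineMap Filter Topology

section Module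

variable {E : Type*} [AddCommGroup E] [Module ℝ E]

/-- `ζ` is a subgradient of `g` at `x`, that is `ζ ∈ ∂g(x)`. Subgradients are linear functionals, so
that no inner product is needed; neither continuity of `ζ` nor convexity of `g` is built in. -/
def IsSubgradientAt (g : E → ℝ) (ζ : E →ₗ[ℝ] ℝ) (x : E) : Prop :=
  ∀ y, g x + ζ (y - x) ≤ g y

/-- The change `D` of the objective predicted for the step `u` from `x`: the convex part `h` is kept
exact and the rest is linearized to `v`. -/
def predictedChange (v : E →ₗ[ℝ] ℝ) (h : E → ℝ) (x u : E) : ℝ :=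
  v u + h (x + u) - h x

theorem IsSubgradientAt.add {g₁ g₂ : E → ℝ} {ζ₁ ζ₂ : E →ₗ[ℝ] ℝ} {x : E}
    (h₁ : IsSubgradientAt g₁ ζ₁ x) (h₂ : IsSubgradientAt g₂ ζ₂ x) :
    IsSubgradientAt (g₁ + g₂) (ζ₁ + ζ₂) x := fun y => by
  simp only [Pi.add_apply, LinearMap.add_apply]
  linarith [h₁ y, h₂ y]

theorem predictedChange_smul_le {h : E → ℝ} (hh : ConvexOn ℝ Set.univ h) (v : E →ₗ[ℝ] ℝ) (x u : E)
    {t : ℝ} (ht₀ : 0 ≤ t) (ht₁ : t ≤ 1) :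
    predictedChange v h x (t • u) ≤ t * predictedChange v h x u := by
  have hconv : h (x + t • u) ≤ (1 - t) * h x + t * h (x + u) := by
    have hcombo : (1 - t) • x + t • (x + u) = x + t • u := by module
    simpa only [hcombo, smul_eq_mul] using
      hh.2 (Set.mem_univ x) (Set.mem_univ (x + u)) (sub_nonneg.2 ht₁) ht₀ (sub_add_cancel 1 t)
  simp only [predictedChange, map_smul, smul_eq_mul]
  linarith

theorem predictedChange_le_neg_of_isMinOn {h : E → ℝ} (hh : ConvexOn ℝ Set.univ h)
    {v : E →ₗ[ℝ] ℝ} {Q : QuadraticForm ℝ E} {x u : E}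
    (hu : IsMinOn (fun w => v w + 1 / 2 * Q w + h (x + w)) Set.univ u) :
    predictedChange v h x u ≤ -Q u := by
  have hscaled : ∀ s ∈ Set.Ioo (0 : ℝ) 1, predictedChange v h x u + (1 - s / 2) * Q u ≤ 0 := by
    rintro s ⟨hs₀, hs₁⟩
    have hmin := isMinOn_univ_iff.1 hu ((1 - s) • u)
    have hchange := predictedChange_smul_le hh v x u (sub_nonneg.2 hs₁.le) (sub_le_self 1 hs₀.le)
    simp only [QuadraticMap.map_smul, smul_eq_mul] at hmin
    refine nonpos_of_mul_nonpos_right ?_ hs₀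
    unfold predictedChange at hchange ⊢
    linarith
  have hlim : Tendsto (fun s : ℝ => predictedChange v h x u + (1 - s / 2) * Q u) (𝓝[>] 0)
      (𝓝 (predictedChange v h x u + (1 - 0 / 2) * Q u)) :=
    (by fun_prop : Continuous _).continuousWithinAt
  have hle := le_of_tendsto hlim (eventually_of_mem (Ioo_mem_nhdsGT one_pos) hscaled)
  linarith

end Module

section NormedSpace

variable {E : Type*} [NormedAddCommGroup E] [NormedSpace ℝ E]

theorem le_add_half_mul_norm_sq_of_norm_fderiv_sub_le {f : E → ℝ} {f' : E → E →L[ℝ] ℝ} {L : ℝ}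
    {x y : E} (hf : ∀ z ∈ segment ℝ x y, HasFDerivAt f (f' z) z)
    (hL : ∀ z ∈ segment ℝ x y, ‖f' z - f' x‖ ≤ L * ‖z - x‖) :
    f y ≤ f x + f' x (y - x) + L / 2 * ‖y - x‖ ^ 2 := by
  have hmem {s : ℝ} (hs : s ∈ Set.Icc 0 1) : lineMap x y s ∈ segment ℝ x y :=
    lineMap_mem_segment ℝ x y hs
  have hline {s : ℝ} (hs : s ∈ Set.Icc 0 1) :
      HasDerivAt (f ∘ lineMap x y) (f' (lineMap x y s) (y - x)) s :=
    (hf _ (hmem hs)).comp_hasDerivAt s hasDerivAt_lineMap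
  have hbound (s : ℝ) : HasDerivAt
      (fun s : ℝ => f x + s * f' x (y - x) + s ^ 2 * (L / 2 * ‖y - x‖ ^ 2))
      (f' x (y - x) + s * (L * ‖y - x‖ ^ 2)) s := by
    refine ((((hasDerivAt_id s).mul_const _).const_add _).add
      ((hasDerivAt_pow 2 s).mul_const _)).congr_deriv ?_
    simp only [Nat.cast_ofNat, Nat.add_one_sub_one, pow_one]
    ring
  have hderiv {s : ℝ} (hs : s ∈ Set.Ico 0 1) :
      f' (lineMap x y s) (y - x) ≤ f' x (y - x) + s * (L * ‖y - x‖ ^ 2) := by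
    have hnorm : ‖lineMap x y s - x‖ = s * ‖y - x‖ := by
      rw [← dist_eq_norm, dist_lineMap_left, Real.norm_of_nonneg hs.1, dist_eq_norm, norm_sub_rev]
    calc f' (lineMap x y s) (y - x)
        = f' x (y - x) + (f' (lineMap x y s) - f' x) (y - x) := by simp
      _ ≤ f' x (y - x) + L * ‖lineMap x y s - x‖ * ‖y - x‖ := by
        gcongr
        exact (le_abs_self _).trans <|
          ContinuousLinearMap.le_of_opNorm_le _ (hL _ (hmem (Set.Ico_subset_Icc_self hs))) _
      _ = f' x (y - x) + s * (L * ‖y - x‖ ^ 2) := by rw [hnorm]; ring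
  have hle := image_le_of_deriv_right_le_deriv_boundary
    (fun s hs => (hline hs).continuousAt.continuousWithinAt)
    (fun s hs => (hline (Set.Ico_subset_Icc_self hs)).hasDerivWithinAt) (by simp)
    (fun s _ => (hbound s).continuousAt.continuousWithinAt)
    (fun s _ => (hbound s).hasDerivWithinAt) (fun s hs => hderiv hs)
    (Set.right_mem_Icc.2 zero_le_one)
  simpa using hle

theorem isSubgradientAt_of_convexOn_of_hasFDerivAt {g : E → ℝ} {g' : E →L[ℝ] ℝ} {x : E}
    (hg : ConvexOn ℝ Set.univ g) (hg' : HasFDerivAt g g' x) : IsSubgradientAt g g' x := fun y => by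
  have hline : HasDerivAt (g ∘ lineMap x y) (g' (y - x)) (0 : ℝ) :=
    HasFDerivAt.comp_hasDerivAt 0 (by simpa using hg') hasDerivAt_lineMap
  have hslope := (hg.comp_affineMap (lineMap x y)).le_slope_of_hasDerivAt
    (Set.mem_univ 0) (Set.mem_univ 1) zero_lt_one hline
  simp only [slope_def_field, Function.comp_apply, lineMap_apply_zero, lineMap_apply_one,
    sub_zero, div_one] at hslope
  simp only [ContinuousLinearMap.coe_coe]
  linarith

variable {f g h : E → ℝ} {x : E} {ζ v : E →ₗ[ℝ] ℝ} {L : ℝ}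

theorem objective_sub_le_predictedChange_add (hf : Differentiable ℝ f)
    (hL : ∀ y, ‖fderiv ℝ f y - fderiv ℝ f x‖ ≤ L * ‖y - x‖)
    (hh : ConvexOn ℝ Set.univ h) (hζ : IsSubgradientAt g ζ x) (hv : v = fderiv ℝ f x - ζ)
    (u : E) {t : ℝ} (ht₀ : 0 ≤ t) (ht₁ : t ≤ 1) :
    (f (x + t • u) + h (x + t • u) - g (x + t • u)) - (f x + h x - g x)
      ≤ t * predictedChange v h x u + L / 2 * t ^ 2 * ‖u‖ ^ 2 := by
  have hsmooth := le_add_half_mul_norm_sq_of_norm_fderiv_sub_le (y := x + t • u)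
    (fun z _ => (hf z).hasFDerivAt) (fun z _ => hL z)
  have hsub := hζ (x + t • u)
  have hchange := predictedChange_smul_le hh v x u ht₀ ht₁
  have hv_apply : v (t • u) = fderiv ℝ f x (t • u) - ζ (t • u) := by rw [hv]; rfl
  rw [add_sub_cancel_left, norm_smul, mul_pow, Real.norm_eq_abs, sq_abs] at hsmooth
  rw [add_sub_cancel_left] at hsub
  rw [predictedChange, hv_apply] at hchange
  linarith

theorem stmt_9_general (hf : Differentiable ℝ f)
    (hL : ∀ y, ‖fderiv ℝ f y - fderiv ℝ f x‖ ≤ L * ‖y - x‖)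
    (hh : ConvexOn ℝ Set.univ h) (hζ : IsSubgradientAt g ζ x) (hv : v = fderiv ℝ f x - ζ)
    {Q : QuadraticForm ℝ E} {m : ℝ} (hQ : ∀ u, m * ‖u‖ ^ 2 ≤ Q u) {Δx : E}
    (hmin : IsMinOn (fun u => v u + 1 / 2 * Q u + h (x + u)) Set.univ Δx)
    {α t : ℝ} (hα : α ≤ 1) (ht₀ : 0 ≤ t) (ht₁ : t ≤ 1) (ht : L * t ≤ 2 * m * (1 - α)) :
    (f (x + t • Δx) + h (x + t • Δx) - g (x + t • Δx)) - (f x + h x - g x)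
      ≤ α * t * predictedChange v h x Δx := by
  have hD : predictedChange v h x Δx ≤ -(m * ‖Δx‖ ^ 2) :=
    (predictedChange_le_neg_of_isMinOn hh hmin).trans (neg_le_neg (hQ Δx))
  have : 0 ≤ 1 - α := sub_nonneg.2 hα
  calc (f (x + t • Δx) + h (x + t • Δx) - g (x + t • Δx)) - (f x + h x - g x)
      ≤ t * predictedChange v h x Δx + L / 2 * t ^ 2 * ‖Δx‖ ^ 2 :=
        objective_sub_le_predictedChange_add hf hL hh hζ hv Δx ht₀ ht₁
    _ = α * t * predictedChange v h x Δx + t * ((1 - α) * predictedChange v h x Δx)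
          + t / 2 * (L * t) * ‖Δx‖ ^ 2 := by ring
    _ ≤ α * t * predictedChange v h x Δx + t * ((1 - α) * -(m * ‖Δx‖ ^ 2))
          + t / 2 * (2 * m * (1 - α)) * ‖Δx‖ ^ 2 := by gcongr
    _ = α * t * predictedChange v h x Δx := by ring

end NormedSpace

theorem norm_fderiv_sub_fderiv {E : Type*} [NormedAddCommGroup E] [InnerProductSpace ℝ E]
    [CompleteSpace E] (f : E → ℝ) (x y : E) :
    ‖fderiv ℝ f x - fderiv ℝ f y‖ = ‖gradient f x - gradient f y‖ := by
  rw [← toDual_gradient, ← toDual_gradient, ← map_sub, LinearIsometryEquiv.norm_map]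

theorem stmt_9 (d : ℕ) (hd : 1 ≤ d)
    (f₁ f₂ h₁ h₂ : EuclideanSpace ℝ (Fin d) → ℝ) (L : ℝ) (hL : 0 < L)
    (hf₁ : Differentiable ℝ f₁)
    (hlip : ∀ x y : EuclideanSpace ℝ (Fin d),
      ‖gradient f₁ x - gradient f₁ y‖ ≤ L * ‖x - y‖)
    (hf₂c : ConvexOn ℝ Set.univ f₂) (hf₂ : Differentiable ℝ f₂)
    (hh₁ : ConvexOn ℝ Set.univ h₁) (hh₂ : ConvexOn ℝ Set.univ h₂)
    (F : EuclideanSpace ℝ (Fin d) → ℝ)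
    (hF : ∀ x, F x = f₁ x - f₂ x + h₁ x - h₂ x)
    (H : EuclideanSpace ℝ (Fin d) →ₗ[ℝ] EuclideanSpace ℝ (Fin d))
    (hsym : ∀ u w : EuclideanSpace ℝ (Fin d), ⟪H u, w⟫ = ⟪u, H w⟫)
    (m : ℝ) (hm : 0 < m)
    (hHm : ∀ u : EuclideanSpace ℝ (Fin d), ⟪H u, u⟫ ≥ m * ‖u‖ ^ 2)
    (x zh₂ : EuclideanSpace ℝ (Fin d))
    (hzh₂ : ∀ y, h₂ y ≥ h₂ x + ⟪zh₂, y - x⟫)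
    (v : EuclideanSpace ℝ (Fin d))
    (hv : v = gradient f₁ x - gradient f₂ x - zh₂)
    (Δx : EuclideanSpace ℝ (Fin d))
    (hmin : ∀ dd : EuclideanSpace ℝ (Fin d),
      ⟪v, Δx⟫ + (1/2) * ⟪H Δx, Δx⟫ + h₁ (x + Δx)
        ≤ ⟪v, dd⟫ + (1/2) * ⟪H dd, dd⟫ + h₁ (x + dd))
    (D : ℝ) (hD : D = ⟪v, Δx⟫ + h₁ (x + Δx) - h₁ x) :
    ∀ α : ℝ, α ∈ Set.Ioo (0:ℝ) 1 →
      ∀ t : ℝ, 0 < t → t ≤ min 1 (2 * m * (1 - α) / L) →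
        F (x + t • Δx) - F x ≤ α * t * D := by
  intro α hα t ht₀ ht
  have hsub := (isSubgradientAt_of_convexOn_of_hasFDerivAt hf₂c (hf₂ x).hasFDerivAt).add
    (show IsSubgradientAt h₂ (innerₗ _ zh₂) x from hzh₂)
  have hstep : L * t ≤ 2 * m * (1 - α) :=
    (le_div_iff₀' hL).1 (ht.trans (min_le_right _ _))
  have hdescent := stmt_9_general (v := innerₗ _ v)
    (Q := LinearMap.BilinMap.toQuadraticMap (innerₗ _ ∘ₗ H))
    hf₁ (fun y => (norm_fderiv_sub_fderiv f₁ y x).trans_le (hlip y x))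
    hh₁ hsub (by ext u; simp [hv, inner_gradient_left, sub_sub])
    hHm (isMinOn_univ_iff.2 hmin) hα.2.le ht₀.le (ht.trans (min_le_left _ _)) hstep
  simp only [predictedChange, innerₗ_apply_apply, Pi.add_apply] at hdescent
  rw [hF, hF, hD]
  linarith
end

section
/- (Sufficient decrease property.) Let h₁ : ℝ^d → ℝ be convex, H a symmetric positive definite linear map with ⟨Hu, u⟩ ≥ m‖u‖² for all u (m > 0), α ∈ (0, 1), x, v ∈ ℝ^d, and let Δx be a minimizer over d ∈ ℝ^d of ⟨v, d⟩ + ½⟨H d, d⟩ + h₁(x + d). Let F : ℝ^d → ℝ, t ∈ (0, 1], x₊ = x + tΔx, and suppose F(x₊) − F(x) ≤ α·t·(⟨v, Δx⟩ + h₁(x + Δx) − h₁(x)). Then F(x₊) − F(x) ≤ −(α/t)·‖x₊ − x‖²_H ≤ −(αm/t)·‖x₊ − x‖² ≤ −αm·‖x₊ − x‖², where ‖u‖²_H = ⟨Hu, u⟩. -/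
open RealInnerProductSpace

/-!
The linear term is convex, so the model minimized by `Δx` is `½ Q + g` with `Q u = ⟪H u, u⟫` and
`g u = ⟪v, u⟫ + h₁ (x + u)` convex. Moving from `Δx` towards `0`, the quadratic part `½ Q` changes
at the rate `-Q Δx` and, by convexity, `g` at a rate at most `g 0 - g Δx`. Minimality makes the sum
of the two nonnegative, so the predicted change `g Δx - g 0` is at most
`-Q Δx = -Q (xplus - x) / t ^ 2`, and the hypothesis on `F` transfers this bound to `F`.
-/

open Set Topology

section OptimalityConditions

variable {E : Type*} [AddCommGroup E] [Module ℝ E]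

lemma lineDeriv_add_sub_nonneg_of_isMinOn_add {s : Set E} {f h : E → ℝ} {f' : ℝ} {a b : E}
    (hh : ConvexOn ℝ s h) (ha : a ∈ s) (hb : b ∈ s)
    (hf : HasLineDerivAt ℝ f f' a (b - a)) (hmin : IsMinOn (f + h) s a) :
    0 ≤ f' + (h b - h a) := by
  have slope_bound : ∀ᶠ τ in 𝓝[>] (0 : ℝ), h a - h b ≤ τ⁻¹ • (f (a + τ • (b - a)) - f a) := by
    filter_upwards [Ioc_mem_nhdsGT one_pos] with τ ⟨τ_pos, τ_le_one⟩
    have combo : (1 - τ) • a + τ • b = a + τ • (b - a) := by module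
    have mem : a + τ • (b - a) ∈ s :=
      combo ▸ hh.1 ha hb (sub_nonneg.2 τ_le_one) τ_pos.le (sub_add_cancel 1 τ)
    have min_le : f a + h a ≤ f (a + τ • (b - a)) + h (a + τ • (b - a)) := hmin mem
    have convex_le : h (a + τ • (b - a)) ≤ (1 - τ) * h a + τ * h b :=
      combo ▸ hh.2 ha hb (sub_nonneg.2 τ_le_one) τ_pos.le (sub_add_cancel 1 τ)
    rw [smul_eq_mul, le_inv_mul_iff₀ τ_pos]
    linarith
  linarith [ge_of_tendsto hf.tendsto_slope_zero_right slope_bound]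

lemma sub_le_neg_quadraticForm_of_isMinOn_half_add {s : Set E} {g : E → ℝ} {a : E}
    (hg : ConvexOn ℝ s g) (h_zero : 0 ∈ s) (ha : a ∈ s) (Q : QuadraticForm ℝ E)
    (hmin : IsMinOn (fun u ↦ 1 / 2 * Q u + g u) s a) :
    g a - g 0 ≤ -Q a := by
  have half_deriv : HasLineDerivAt ℝ ((1 / 2 : ℝ) • Q) (-Q a) a (0 - a) := by
    convert ((1 / 2 : ℝ) • Q).hasLineDerivAt a (0 - a) using 1
    rw [zero_sub, QuadraticMap.polar_neg_right, QuadraticMap.polar_self, smul_apply, smul_eq_mul,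
      nsmul_eq_mul]
    ring
  linarith [lineDeriv_add_sub_nonneg_of_isMinOn_add hg ha h_zero half_deriv hmin]

lemma add_sub_le_neg_quadraticForm_of_isMinOn {s : Set E} {h : E → ℝ} {x Δx : E}
    (hh : ConvexOn ℝ s h) (hx : x ∈ s) (hxΔ : x + Δx ∈ s) (ℓ : E →ₗ[ℝ] ℝ)
    (Q : QuadraticForm ℝ E)
    (hmin : IsMinOn (fun u ↦ ℓ u + 1 / 2 * Q u + h (x + u)) ((x + ·) ⁻¹' s) Δx) :
    ℓ Δx + h (x + Δx) - h x ≤ -Q Δx := by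
  have shifted_convex : ConvexOn ℝ ((x + ·) ⁻¹' s) (fun u ↦ ℓ u + h (x + u)) :=
    have shift := hh.translate_right x
    (ℓ.convexOn shift.1).add shift
  have zero_mem : (0 : E) ∈ (x + ·) ⁻¹' s := by simpa using hx
  have hmin' : IsMinOn (fun u ↦ 1 / 2 * Q u + (ℓ u + h (x + u))) ((x + ·) ⁻¹' s) Δx := by
    simpa only [add_left_comm, add_assoc] using hmin
  simpa using sub_le_neg_quadraticForm_of_isMinOn_half_add shifted_convex zero_mem hxΔ Q hmin'

end OptimalityConditions

theorem stmt_12_general {E : Type*} [SeminormedAddCommGroup E] [NormedSpace ℝ E]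
    {s : Set E} {h₁ : E → ℝ} (hh₁ : ConvexOn ℝ s h₁) (ℓ : E →ₗ[ℝ] ℝ) (Q : QuadraticForm ℝ E)
    {m : ℝ} (hm : 0 ≤ m) (hQm : ∀ u, m * ‖u‖ ^ 2 ≤ Q u) {α : ℝ} (hα : 0 ≤ α)
    {x Δx : E} (hx : x ∈ s) (hxΔ : x + Δx ∈ s)
    (hmin : IsMinOn (fun u ↦ ℓ u + 1 / 2 * Q u + h₁ (x + u)) ((x + ·) ⁻¹' s) Δx)
    {F : E → ℝ} {t : ℝ} (ht : t ∈ Ioc 0 1) {xplus : E} (hxplus : xplus = x + t • Δx)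
    (hdesc : F xplus - F x ≤ α * t * (ℓ Δx + h₁ (x + Δx) - h₁ x)) :
    F xplus - F x ≤ -(α / t) * Q (xplus - x) ∧
    -(α / t) * Q (xplus - x) ≤ -(α * m / t) * ‖xplus - x‖ ^ 2 ∧
    -(α * m / t) * ‖xplus - x‖ ^ 2 ≤ -(α * m) * ‖xplus - x‖ ^ 2 := by
  obtain ⟨t_pos, t_le_one⟩ := ht
  have step_form : Q (xplus - x) = t * t * Q Δx := by
    rw [hxplus, add_sub_cancel_left, QuadraticMap.map_smul, smul_eq_mul]
  refine ⟨?_, ?_, ?_⟩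
  · calc
      F xplus - F x ≤ α * t * (ℓ Δx + h₁ (x + Δx) - h₁ x) := hdesc
      _ ≤ α * t * -Q Δx := by
        gcongr
        exact add_sub_le_neg_quadraticForm_of_isMinOn hh₁ hx hxΔ ℓ Q hmin
      _ = -(α / t) * Q (xplus - x) := by
        rw [step_form]
        field_simp
  · calc
      -(α / t) * Q (xplus - x) ≤ -(α / t) * (m * ‖xplus - x‖ ^ 2) :=
        mul_le_mul_of_nonpos_left (hQm _) (neg_nonpos.2 (by positivity))
      _ = -(α * m / t) * ‖xplus - x‖ ^ 2 := by ring
  · gcongr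
    exact le_div_self (by positivity) t_pos t_le_one

theorem stmt_12 (d : ℕ) (hd : 1 ≤ d)
    (h₁ : EuclideanSpace ℝ (Fin d) → ℝ) (hh₁ : ConvexOn ℝ Set.univ h₁)
    (H : EuclideanSpace ℝ (Fin d) →ₗ[ℝ] EuclideanSpace ℝ (Fin d))
    (hsym : ∀ u w : EuclideanSpace ℝ (Fin d), ⟪H u, w⟫ = ⟪u, H w⟫)
    (hpd : ∀ u : EuclideanSpace ℝ (Fin d), u ≠ 0 → 0 < ⟪H u, u⟫)
    (m : ℝ) (hm : 0 < m)
    (hHm : ∀ u : EuclideanSpace ℝ (Fin d), ⟪H u, u⟫ ≥ m * ‖u‖ ^ 2)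
    (α : ℝ) (hα : α ∈ Set.Ioo (0:ℝ) 1)
    (x v : EuclideanSpace ℝ (Fin d))
    (Δx : EuclideanSpace ℝ (Fin d))
    (hmin : ∀ dd : EuclideanSpace ℝ (Fin d),
      ⟪v, Δx⟫ + (1/2) * ⟪H Δx, Δx⟫ + h₁ (x + Δx)
        ≤ ⟪v, dd⟫ + (1/2) * ⟪H dd, dd⟫ + h₁ (x + dd))
    (F : EuclideanSpace ℝ (Fin d) → ℝ)
    (t : ℝ) (ht : t ∈ Set.Ioc (0:ℝ) 1)
    (xplus : EuclideanSpace ℝ (Fin d)) (hxplus : xplus = x + t • Δx)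
    (hdesc : F xplus - F x ≤ α * t * (⟪v, Δx⟫ + h₁ (x + Δx) - h₁ x)) :
    F xplus - F x ≤ -(α / t) * ⟪H (xplus - x), xplus - x⟫ ∧
    -(α / t) * ⟪H (xplus - x), xplus - x⟫ ≤ -(α * m / t) * ‖xplus - x‖ ^ 2 ∧
    -(α * m / t) * ‖xplus - x‖ ^ 2 ≤ -(α * m) * ‖xplus - x‖ ^ 2 := by
  exact stmt_12_general hh₁ (innerₗ _ v) (LinearMap.BilinMap.toQuadraticMap (innerₗ _ ∘ₗ H))
    hm.le hHm hα.1.le (mem_univ x) (mem_univ _) (fun u _ ↦ hmin u) ht hxplus hdesc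
end

section
/- (DC decomposition of the smooth transductive loss.) Let τ > 0 and define g : ℝ → ℝ by g(u) = log(1 + exp(−u)); set g₁(u) = (g(u) − g(u + τ))/τ, g₂(u) = g₁(−u), T(u) = 1 − g₁(u) − g₂(u), T₁(u) = 1 + (g(u + τ) + g(−u + τ))/τ, and T₂(u) = (g(u) + g(−u))/τ. Then g is convex on ℝ, T₁ and T₂ are convex on ℝ, and T(u) = T₁(u) − T₂(u) for every u ∈ ℝ. -/
/-- The logistic loss `u ↦ log (1 + exp (-u))` of a classification margin `u`. -/
noncomputable def logisticLoss (u : ℝ) : ℝ :=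
  Real.log (1 + Real.exp (-u))

theorem hasDerivAt_logisticLoss (u : ℝ) :
    HasDerivAt logisticLoss (-Real.sigmoid (-u)) u := by
  have h : HasDerivAt logisticLoss (Real.exp (-u) * -1 / (1 + Real.exp (-u))) u :=
    (((hasDerivAt_neg u).exp).const_add 1).log (by positivity)
  convert h using 1
  rw [← Real.sigmoid_mul_rexp_neg, Real.sigmoid_def]
  ring

theorem monotone_deriv_logisticLoss : Monotone (deriv logisticLoss) := by
  intro u v huv
  rw [(hasDerivAt_logisticLoss u).deriv, (hasDerivAt_logisticLoss v).deriv]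
  exact neg_le_neg (Real.sigmoid_monotone (neg_le_neg huv))

theorem convexOn_logisticLoss : ConvexOn ℝ Set.univ logisticLoss :=
  monotone_deriv_logisticLoss.convexOn_univ_of_deriv
    fun u => (hasDerivAt_logisticLoss u).differentiableAt

theorem convexOn_comp_add_add_comp_sub {𝕜 E β : Type*} [Ring 𝕜] [PartialOrder 𝕜]
    [AddCommGroup E] [Module 𝕜 E] [AddCommMonoid β] [PartialOrder β] [IsOrderedAddMonoid β]
    [DistribMulAction 𝕜 β] {s : Set E} {f : E → β} (hf : ConvexOn 𝕜 s f) (c : E) :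
    ConvexOn 𝕜 {u | c + u ∈ s ∧ c - u ∈ s} fun u => f (c + u) + f (c - u) := by
  have h_right : ConvexOn 𝕜 {u | c + u ∈ s} fun u => f (c + u) := hf.translate_right c
  have h_left : ConvexOn 𝕜 {u | c - u ∈ s} fun u => f (c - u) := by
    simp only [sub_eq_add_neg]
    exact h_right.comp_linearMap (-LinearMap.id)
  have h_convex : Convex 𝕜 {u | c + u ∈ s ∧ c - u ∈ s} := h_right.1.inter h_left.1
  exact (h_right.subset (fun _ hu => hu.1) h_convex).add
    (h_left.subset (fun _ hu => hu.2) h_convex)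

theorem stmt_17 (τ : ℝ) (hτ : 0 < τ)
    (g g₁ g₂ T T₁ T₂ : ℝ → ℝ)
    (hg : ∀ u, g u = Real.log (1 + Real.exp (-u)))
    (hg₁ : ∀ u, g₁ u = (g u - g (u + τ)) / τ)
    (hg₂ : ∀ u, g₂ u = g₁ (-u))
    (hT : ∀ u, T u = 1 - g₁ u - g₂ u)
    (hT₁ : ∀ u, T₁ u = 1 + (g (u + τ) + g (-u + τ)) / τ)
    (hT₂ : ∀ u, T₂ u = (g u + g (-u)) / τ) :
    ConvexOn ℝ Set.univ g ∧ ConvexOn ℝ Set.univ T₁ ∧ ConvexOn ℝ Set.univ T₂ ∧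
    ∀ u, T u = T₁ u - T₂ u := by
  obtain rfl : g = logisticLoss := funext hg
  have convexOn_symmetrization (c : ℝ) : ConvexOn ℝ Set.univ fun u =>
      τ⁻¹ • (logisticLoss (c + u) + logisticLoss (c - u)) := by
    simpa only [Set.mem_univ, and_self, Set.ofPred_true] using
      (convexOn_comp_add_add_comp_sub convexOn_logisticLoss c).smul (inv_nonneg.2 hτ.le)
  refine ⟨convexOn_logisticLoss, ?_, ?_, fun u => ?_⟩
  · refine ((convexOn_symmetrization τ).add_const 1).congr fun u _ => ?_
    simp only [hT₁, Pi.add_apply, smul_eq_mul]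
    ring_nf
  · refine (convexOn_symmetrization 0).congr fun u _ => ?_
    simp only [hT₂, smul_eq_mul, zero_add, zero_sub]
    ring
  · rw [hT, hT₁, hT₂, hg₂, hg₁, hg₁]
    ring
end
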